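/- For every k ≥ 1, liminf_{n→∞} (1/n)·log|X_n| ≥ (1/(2·(2^k − 1)))·log|Σ_k|. -/

import Mathlib

/-!
Odd numbers `l = 2q + 1` with `d ≤ q < 2d` generate pairwise disjoint translates `M_k(l)` of
`M_k(3)`: the `j`-th layer (from `j = 0`) of `M_k(2q+1)` is the open interval
`(2^(j+1) q, 2^(j+1) (q+1))`, inside `[2^j · 2d, 2^(j+1) · 2d)`. Placing an arbitrary element of
`Σ_k` on each of these `d` translates, an arbitrary element of `X_{2d-1}` on `[1, 2d-1]` and zeros
elsewhere gives an element of `X_n` as soon as `2^(k+1) d ≤ n`: adjacent layers are separated by a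
zero, and no odd number `2q + 1` is the double of anything, so the pieces do not interact
(`glue_mem`). Hence `|X_{2d-1}| · |Σ_k|^d ≤ |X_n|` with `d = ⌊n / 2^(k+1)⌋` (`card_step`).
Iterating, `log |X_n| ≥ log |Σ_k| · (n / (2(2^k - 1)) - O(log n))` (`log_card_lower`), because
`α = 1 / (2(2^k - 1))` solves `α = 2^(-k-1) + 2^(-k) α`. Dividing by `n` gives the bound.
-/

open Filter Topology

/-- `V_j(l)` (0-indexed: `Vl l 0 = V_1(l) = {l}`). -/
def Vl (l : ℕ) : ℕ → Finset ℕ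
  | 0 => {l}
  | j + 1 => (Vl l j).biUnion fun i => {2 * i - 1, 2 * i, 2 * i + 1}

/-- `M_k(l) = V_1(l) ∪ ⋯ ∪ V_k(l)`. -/
def Ml (l k : ℕ) : Finset ℕ := (Finset.range k).biUnion (Vl l)

/-- `X_n` : functions `x : {1,…,n} → {0,1}` (encoded as functions `ℕ → Fin 2`
vanishing outside `[1,n]`) with `x_k·x_{2k} = 0` whenever `2k ≤ n` and
`A(x_k, x_{k+1}) = 1` whenever `k+1 ≤ n`. -/
def XA (A : Fin 2 → Fin 2 → Fin 2) (n : ℕ) : Set (ℕ → Fin 2) :=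
  {x | (∀ k, 1 ≤ k → 2 * k ≤ n → x k * x (2 * k) = 0) ∧
       (∀ k, 1 ≤ k → k + 1 ≤ n → A (x k) (x (k + 1)) = 1) ∧
       (∀ m, m = 0 ∨ n < m → x m = 0)}

/-- `Σ_k` : functions `y : M_k(3) → {0,1}` with `y_i·y_{2i} = 0` whenever `i, 2i ∈
M_k(3)` and `A(y_i, y_{i+1}) = 1` whenever `i, i+1 ∈ M_k(3)`. -/
def SigA (A : Fin 2 → Fin 2 → Fin 2) (k : ℕ) : Set (ℕ → Fin 2) :=
  {y | (∀ i, i ∈ Ml 3 k → 2 * i ∈ Ml 3 k → y i * y (2 * i) = 0) ∧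
       (∀ i, i ∈ Ml 3 k → i + 1 ∈ Ml 3 k → A (y i) (y (i + 1)) = 1) ∧
       (∀ m, m ∉ Ml 3 k → y m = 0)}

/-! ### The shape of `M_k(3)` -/

lemma Vl_three (j : ℕ) : Vl 3 j = Finset.Ioo (2 ^ (j + 1)) (2 ^ (j + 2)) := by
  induction j with
  | zero => decide
  | succ j ih =>
    ext x
    have h1 : 2 ^ (j + 1 + 1) = 2 * 2 ^ (j + 1) := by ring
    have h2 : 2 ^ (j + 1 + 2) = 4 * 2 ^ (j + 1) := by ring
    have h3 : 2 ^ (j + 2) = 2 * 2 ^ (j + 1) := by ring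
    have h4 : 2 ≤ 2 ^ (j + 1) := by
      have := Nat.one_le_two_pow (n := j)
      rw [pow_succ]; omega
    simp only [Vl, ih, Finset.mem_biUnion, Finset.mem_Ioo, Finset.mem_insert,
      Finset.mem_singleton, h1, h2]
    generalize 2 ^ (j + 1) = P at *
    constructor
    · rintro ⟨i, hi, hx⟩
      omega
    · intro hx
      by_cases h : x = 2 * P + 1
      · exact ⟨P + 1, by omega, by omega⟩
      · exact ⟨x / 2, by omega, by omega⟩

lemma mem_Ml_three {k m : ℕ} :
    m ∈ Ml 3 k ↔ ∃ j < k, 2 ^ (j + 1) < m ∧ m < 2 ^ (j + 2) := by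
  simp [Ml, Vl_three]

/-- The dyadic form of membership in `M_k(3)`: below `2^(k+1)`, among the numbers
`≥ 2`, exactly the powers of two are left out. -/
lemma add_mem_Ml_three {k j r : ℕ} (hr : r < 2 ^ (j + 1)) :
    2 ^ (j + 1) + r ∈ Ml 3 k ↔ j < k ∧ r ≠ 0 := by
  rw [mem_Ml_three]
  constructor
  · rintro ⟨i, hi, h1, h2⟩
    have h3 : 2 ^ (j + 2) = 2 * 2 ^ (j + 1) := by ring
    have a1 : i + 1 < j + 2 := (Nat.pow_lt_pow_iff_right (by norm_num : 1 < 2)).1 (by omega)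
    have a2 : j + 1 < i + 2 := (Nat.pow_lt_pow_iff_right (by norm_num : 1 < 2)).1 (by omega)
    obtain rfl : i = j := by omega
    exact ⟨hi, by omega⟩
  · rintro ⟨hj, h0⟩
    have h3 : 2 ^ (j + 2) = 2 * 2 ^ (j + 1) := by ring
    exact ⟨j, hj, by omega, by omega⟩

/-! ### Gluing configurations -/

/-- The configuration equal to `u` on `[0, 2d)` and, for `d ≤ q < 2d`, to the copy of `y (q - d)`
transported from `M_k(3)` to `M_k(2q+1)`: the point `2^(j+1) q + r` with `r < 2^(j+1)` corresponds
to `2^(j+1) + r`. For a position `i ≥ 2d` the layer `j` is read off from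
`2^j · 2d ≤ i < 2^(j+1) · 2d`. -/
def glue (d : ℕ) (u : ℕ → Fin 2) (y : ℕ → ℕ → Fin 2) (i : ℕ) : Fin 2 :=
  if i < 2 * d then u i
  else
    y (i / 2 ^ (Nat.log 2 (i / (2 * d)) + 1) - d)
      (2 ^ (Nat.log 2 (i / (2 * d)) + 1) + i % 2 ^ (Nat.log 2 (i / (2 * d)) + 1))

lemma glue_of_lt {d i : ℕ} (u : ℕ → Fin 2) (y : ℕ → ℕ → Fin 2) (h : i < 2 * d) :
    glue d u y i = u i := by
  simp [glue, h]

lemma glue_dyadic {d j q r : ℕ} (u : ℕ → Fin 2) (y : ℕ → ℕ → Fin 2) (hd : d ≤ q)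
    (hq : q < 2 * d) (hr : r < 2 ^ (j + 1)) :
    glue d u y (2 ^ (j + 1) * q + r) = y (q - d) (2 ^ (j + 1) + r) := by
  have hP : 1 ≤ 2 ^ j := Nat.one_le_two_pow
  have h2 : 2 ^ (j + 1) = 2 * 2 ^ j := by ring
  have hlow : 2 ^ j * (2 * d) ≤ 2 ^ (j + 1) * q + r := by rw [h2]; nlinarith
  have hhigh : 2 ^ (j + 1) * q + r < 2 ^ (j + 1) * (2 * d) := by nlinarith
  have hlog : Nat.log 2 ((2 ^ (j + 1) * q + r) / (2 * d)) = j := by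
    refine Nat.log_eq_of_pow_le_of_lt_pow ?_ ?_
    · rwa [Nat.le_div_iff_mul_le (by omega)]
    · rwa [Nat.div_lt_iff_lt_mul (by omega)]
  have hge : ¬ 2 ^ (j + 1) * q + r < 2 * d := by nlinarith
  rw [glue, if_neg hge, hlog, Nat.mul_add_div (by positivity), Nat.div_eq_of_lt hr,
    Nat.mul_add_mod, Nat.mod_eq_of_lt hr, add_zero]

lemma exists_dyadic {d i : ℕ} (hd : 1 ≤ d) (hi : 2 * d ≤ i) :
    ∃ j q r, d ≤ q ∧ q < 2 * d ∧ r < 2 ^ (j + 1) ∧ i = 2 ^ (j + 1) * q + r := by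
  set j := Nat.log 2 (i / (2 * d)) with hj
  have hne : i / (2 * d) ≠ 0 := by
    have := Nat.div_pos hi (by omega)
    omega
  have h1 : 2 ^ j ≤ i / (2 * d) := Nat.pow_log_le_self 2 hne
  have h2 : i / (2 * d) < 2 ^ (j + 1) := Nat.lt_pow_succ_log_self (by norm_num) _
  rw [Nat.le_div_iff_mul_le (by omega)] at h1
  rw [Nat.div_lt_iff_lt_mul (by omega)] at h2
  refine ⟨j, i / 2 ^ (j + 1), i % 2 ^ (j + 1), ?_, ?_, Nat.mod_lt _ (by positivity),
    (Nat.div_add_mod _ _).symm⟩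
  · rw [Nat.le_div_iff_mul_le (by positivity), pow_succ]
    linarith
  · rw [Nat.div_lt_iff_lt_mul (by positivity)]
    linarith

lemma SigA.mul_eq_zero {A : Fin 2 → Fin 2 → Fin 2} {k : ℕ} {y : ℕ → Fin 2} (hy : y ∈ SigA A k)
    (p : ℕ) : y p * y (2 * p) = 0 := by
  by_cases h1 : p ∈ Ml 3 k
  · by_cases h2 : 2 * p ∈ Ml 3 k
    · exact hy.1 p h1 h2
    · simp [hy.2.2 _ h2]
  · simp [hy.2.2 _ h1]

lemma SigA.adj {A : Fin 2 → Fin 2 → Fin 2} (hA : ∀ a : Fin 2, A 0 a = 1 ∧ A a 0 = 1) {k : ℕ}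
    {y : ℕ → Fin 2} (hy : y ∈ SigA A k) (p : ℕ) : A (y p) (y (p + 1)) = 1 := by
  by_cases h1 : p ∈ Ml 3 k
  · by_cases h2 : p + 1 ∈ Ml 3 k
    · exact hy.2.1 p h1 h2
    · simp [hy.2.2 _ h2, hA]
  · simp [hy.2.2 _ h1, hA]

/-- The glued configuration vanishes at the end points `2^(j+1) q` that separate the layers,
including the last one, `q = 2d`. -/
lemma glue_sep {A : Fin 2 → Fin 2 → Fin 2} {k d j q : ℕ} (hd1 : 1 ≤ d) {u : ℕ → Fin 2}
    {y : ℕ → ℕ → Fin 2} (hy : ∀ t, y t ∈ SigA A k) (hd : d ≤ q) (hq : q ≤ 2 * d) :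
    glue d u y (2 ^ (j + 1) * q) = 0 := by
  have key : ∀ j q, d ≤ q → q < 2 * d → glue d u y (2 ^ (j + 1) * q) = 0 := by
    intro j q hd hq
    have := glue_dyadic (j := j) (r := 0) u y hd hq (by positivity)
    rw [add_zero] at this
    rw [this]
    refine (hy _).2.2 _ ?_
    rw [add_mem_Ml_three (by positivity)]
    simp
  rcases hq.lt_or_eq with h | rfl
  · exact key j q hd h
  · have := key (j + 1) d le_rfl (by omega)
    rwa [pow_succ, mul_assoc] at this

lemma glue_mem {A : Fin 2 → Fin 2 → Fin 2} (hA : ∀ a : Fin 2, A 0 a = 1 ∧ A a 0 = 1)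
    {k d n : ℕ} (hd : 1 ≤ d) (hn : 2 ^ (k + 1) * d ≤ n) {u : ℕ → Fin 2}
    (hu : u ∈ XA A (2 * d - 1)) {y : ℕ → ℕ → Fin 2} (hy : ∀ t, y t ∈ SigA A k) :
    glue d u y ∈ XA A n := by
  have hP : 1 ≤ 2 ^ k := Nat.one_le_two_pow
  have h2d : 2 * d ≤ n := by rw [pow_succ] at hn; nlinarith
  refine ⟨fun i hi _ => ?_, fun i hi _ => ?_, fun m hm => ?_⟩
  · rcases lt_or_ge i (2 * d) with h | h
    · rcases lt_or_ge (2 * i) (2 * d) with h' | h'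
      · rw [glue_of_lt u y h, glue_of_lt u y h']
        exact hu.1 i hi (by omega)
      -- `2i` lies in the lowest layer, where the even positions are separators.
      · have := glue_sep (j := 0) hd (u := u) hy (q := i) (by omega) h.le
        simp only [zero_add, pow_one] at this
        simp [this]
    · obtain ⟨j, q, r, h1, h2, h3, rfl⟩ := exists_dyadic hd h
      have e : 2 * (2 ^ (j + 1) * q + r) = 2 ^ (j + 1 + 1) * q + 2 * r := by ring
      have hr : 2 * r < 2 ^ (j + 1 + 1) := by rw [pow_succ 2 (j + 1)]; omega
      rw [e, glue_dyadic u y h1 h2 h3, glue_dyadic u y h1 h2 hr]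
      have e' : 2 ^ (j + 1 + 1) + 2 * r = 2 * (2 ^ (j + 1) + r) := by ring
      rw [e']
      exact SigA.mul_eq_zero (hy _) _
  · rcases lt_or_ge i (2 * d) with h | h
    · rcases lt_or_ge (i + 1) (2 * d) with h' | h'
      · rw [glue_of_lt u y h, glue_of_lt u y h']
        exact hu.2.1 i hi (by omega)
      · have := glue_sep (j := 0) hd (u := u) hy (q := d) le_rfl (by omega)
        simp only [zero_add, pow_one] at this
        obtain rfl : i = 2 * d - 1 := by omega
        rw [Nat.sub_add_cancel (by omega), this]
        exact (hA _).2
    · obtain ⟨j, q, r, h1, h2, h3, rfl⟩ := exists_dyadic hd h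
      rcases lt_or_ge (r + 1) (2 ^ (j + 1)) with h' | h'
      · rw [add_assoc, glue_dyadic u y h1 h2 h3, glue_dyadic u y h1 h2 h', ← add_assoc]
        exact SigA.adj hA (hy _) _
      · have e : 2 ^ (j + 1) * q + r + 1 = 2 ^ (j + 1) * (q + 1) := by
          rw [mul_add]; omega
        rw [e, glue_sep hd hy (by omega) (by omega)]
        exact (hA _).2
  · rcases lt_or_ge m (2 * d) with h | h
    · rw [glue_of_lt u y h]
      exact hu.2.2 m (Or.inl (by omega))
    · obtain ⟨j, q, r, h1, h2, h3, rfl⟩ := exists_dyadic hd h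
      rw [glue_dyadic u y h1 h2 h3]
      refine (hy _).2.2 _ ?_
      rw [add_mem_Ml_three h3]
      rintro ⟨hj, -⟩
      have hlt : 2 ^ (j + 1) * q + r < 2 ^ (j + 1) * (2 * d) := by nlinarith
      have hle : 2 ^ (j + 1) ≤ 2 ^ k := Nat.pow_le_pow_right (by norm_num) hj
      have : 2 ^ (j + 1) * (2 * d) ≤ 2 ^ k * (2 * d) := Nat.mul_le_mul_right _ hle
      have : 2 ^ k * (2 * d) = 2 ^ (k + 1) * d := by ring
      omega

/-! ### Counting -/

lemma XA_restrict_injective (A : Fin 2 → Fin 2 → Fin 2) (n : ℕ) :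
    Function.Injective fun (x : XA A n) (i : Fin n) => x.1 (i + 1) := by
  intro x x' h
  apply Subtype.ext
  funext m
  by_cases hm : m = 0 ∨ n < m
  · rw [x.2.2.2 m hm, x'.2.2.2 m hm]
  · have := congrFun h ⟨m - 1, by omega⟩
    simpa [Nat.sub_add_cancel (show 1 ≤ m by omega)] using this

instance XA_finite (A : Fin 2 → Fin 2 → Fin 2) (n : ℕ) : Finite (XA A n) :=
  Finite.of_injective _ (XA_restrict_injective A n)

lemma card_XA_le (A : Fin 2 → Fin 2 → Fin 2) (n : ℕ) : Nat.card (XA A n) ≤ 2 ^ n := by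
  simpa using Nat.card_le_card_of_injective _ (XA_restrict_injective A n)

instance SigA_finite (A : Fin 2 → Fin 2 → Fin 2) (k : ℕ) : Finite (SigA A k) := by
  refine Finite.of_injective (fun (y : SigA A k) (i : Ml 3 k) => y.1 i) ?_
  intro y y' h
  apply Subtype.ext
  funext m
  by_cases hm : m ∈ Ml 3 k
  · exact congrFun h ⟨m, hm⟩
  · rw [y.2.2.2 m hm, y'.2.2.2 m hm]

lemma zero_mem_XA {A : Fin 2 → Fin 2 → Fin 2} (hA : ∀ a : Fin 2, A 0 a = 1 ∧ A a 0 = 1) (n : ℕ) :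
    (0 : ℕ → Fin 2) ∈ XA A n := by
  simp [XA, hA]

lemma zero_mem_SigA {A : Fin 2 → Fin 2 → Fin 2} (hA : ∀ a : Fin 2, A 0 a = 1 ∧ A a 0 = 1)
    (k : ℕ) : (0 : ℕ → Fin 2) ∈ SigA A k := by
  simp [SigA, hA]

lemma card_XA_pos {A : Fin 2 → Fin 2 → Fin 2} (hA : ∀ a : Fin 2, A 0 a = 1 ∧ A a 0 = 1) (n : ℕ) :
    1 ≤ Nat.card (XA A n) :=
  haveI : Nonempty (XA A n) := ⟨⟨0, zero_mem_XA hA n⟩⟩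
  Nat.card_pos

lemma card_SigA_pos {A : Fin 2 → Fin 2 → Fin 2} (hA : ∀ a : Fin 2, A 0 a = 1 ∧ A a 0 = 1)
    (k : ℕ) : 1 ≤ Nat.card (SigA A k) :=
  haveI : Nonempty (SigA A k) := ⟨⟨0, zero_mem_SigA hA k⟩⟩
  Nat.card_pos

/-- Extension by zero of a family in `Σ_k` indexed by `Fin d`. -/
def extendFamily {A : Fin 2 → Fin 2 → Fin 2} {k d : ℕ} (y : Fin d → SigA A k) (t : ℕ) :
    ℕ → Fin 2 :=
  if h : t < d then (y ⟨t, h⟩).1 else 0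

lemma card_step {A : Fin 2 → Fin 2 → Fin 2} (hA : ∀ a : Fin 2, A 0 a = 1 ∧ A a 0 = 1)
    {k d n : ℕ} (hd : 1 ≤ d) (hn : 2 ^ (k + 1) * d ≤ n) :
    Nat.card (XA A (2 * d - 1)) * Nat.card (SigA A k) ^ d ≤ Nat.card (XA A n) := by
  have hmem : ∀ (y : Fin d → SigA A k) (t : ℕ), extendFamily y t ∈ SigA A k := by
    intro y t
    unfold extendFamily
    split_ifs with h
    · exact (y ⟨t, h⟩).2
    · exact zero_mem_SigA hA k
  let F : XA A (2 * d - 1) × (Fin d → SigA A k) → XA A n := fun p =>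
    ⟨glue d p.1.1 (extendFamily p.2), glue_mem hA hd hn p.1.2 (hmem p.2)⟩
  have hF : Function.Injective F := by
    rintro ⟨u, y⟩ ⟨u', y'⟩ h
    have h' : ∀ i, glue d u.1 (extendFamily y) i = glue d u'.1 (extendFamily y') i :=
      fun i => congrFun (congrArg Subtype.val h) i
    refine Prod.ext (Subtype.ext (funext fun i => ?_))
      (funext fun t => Subtype.ext (funext fun m => ?_))
    · rcases lt_or_ge i (2 * d) with hi | hi
      · simpa [glue_of_lt _ _ hi] using h' i
      · exact (u.2.2.2 i (Or.inr (by omega))).trans (u'.2.2.2 i (Or.inr (by omega))).symm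
    · by_cases hm : m ∈ Ml 3 k
      · obtain ⟨j, -, h1, h2⟩ := mem_Ml_three.1 hm
        obtain ⟨r, rfl⟩ := Nat.exists_eq_add_of_le h1.le
        have hr : r < 2 ^ (j + 1) := by
          have : 2 ^ (j + 2) = 2 * 2 ^ (j + 1) := by ring
          omega
        have ht := t.2
        have := h' (2 ^ (j + 1) * (d + t) + r)
        rw [glue_dyadic _ _ (by omega) (by omega) hr,
          glue_dyadic _ _ (by omega) (by omega) hr] at this
        simpa [extendFamily] using this
      · exact ((y t).2.2.2 m hm).trans ((y' t).2.2.2 m hm).symm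
  have := Nat.card_le_card_of_injective F hF
  rwa [Nat.card_prod, Nat.card_fun, Nat.card_fin] at this

/-! ### The asymptotic bound -/

lemma log_card_lower {A : Fin 2 → Fin 2 → Fin 2} (hA : ∀ a : Fin 2, A 0 a = 1 ∧ A a 0 = 1)
    {k : ℕ} (hk : 1 ≤ k) (n : ℕ) :
    Real.log (Nat.card (SigA A k)) *
        (1 / (2 * ((2 : ℝ) ^ k - 1)) * n - 3 * (Nat.log 2 n + 1)) ≤
      Real.log (Nat.card (XA A n)) := by
  have hS : 0 ≤ Real.log (Nat.card (SigA A k)) := Real.log_natCast_nonneg _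
  have hp : (2 : ℝ) ≤ 2 ^ k := by
    calc (2 : ℝ) = 2 ^ 1 := by norm_num
      _ ≤ 2 ^ k := pow_le_pow_right₀ (by norm_num) hk
  set α : ℝ := 1 / (2 * ((2 : ℝ) ^ k - 1)) with hα
  have hα1 : α * (2 * ((2 : ℝ) ^ k - 1)) = 1 := by
    rw [hα]; field_simp [show (2 : ℝ) ^ k - 1 ≠ 0 by linarith]
  have hα0 : 0 ≤ α := by rw [hα]; apply div_nonneg <;> linarith
  have hα2 : α ≤ 1 / 2 := by nlinarith
  induction n using Nat.strong_induction_on with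
  | _ n ih =>
    set d := n / 2 ^ (k + 1) with hd
    have hlt : n < 2 ^ (k + 1) * (d + 1) := Nat.lt_mul_div_succ n (by positivity)
    have hle : 2 ^ (k + 1) * d ≤ n := Nat.mul_div_le n _
    have hαn : α * n ≤ (1 + 2 * α) * (d + 1) := by
      have h : (n : ℝ) ≤ 2 ^ (k + 1) * (d + 1) := by exact_mod_cast hlt.le
      calc α * n ≤ α * (2 ^ (k + 1) * (d + 1)) := mul_le_mul_of_nonneg_left h hα0
        _ = (α * (2 * ((2 : ℝ) ^ k - 1)) + 2 * α) * (d + 1) := by ring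
        _ = _ := by rw [hα1]
    rcases Nat.eq_zero_or_pos d with h0 | hpos
    · refine le_trans ?_ (Real.log_natCast_nonneg _)
      refine mul_nonpos_of_nonneg_of_nonpos hS ?_
      rw [h0] at hαn
      have : (0 : ℝ) ≤ Nat.log 2 n := Nat.cast_nonneg _
      push_cast at hαn
      linarith
    · have h4 : 4 * d ≤ n := by
        have : 4 ≤ 2 ^ (k + 1) := by
          calc 4 = 2 ^ 2 := by norm_num
            _ ≤ 2 ^ (k + 1) := Nat.pow_le_pow_right (by norm_num) (by omega)
        nlinarith
      have hih := ih (2 * d - 1) (by omega)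
      have hlog : Nat.log 2 (2 * d - 1) + 1 ≤ Nat.log 2 n := by
        rw [← Nat.log_mul_base (by norm_num) (by omega)]
        exact Nat.log_mono_right (by omega)
      have hlogR : (Nat.log 2 (2 * d - 1) : ℝ) + 1 ≤ Nat.log 2 n := by exact_mod_cast hlog
      have hcast : ((2 * d - 1 : ℕ) : ℝ) = 2 * d - 1 := by
        rw [Nat.cast_sub (by omega)]; push_cast; ring
      rw [hcast] at hih
      have hX : (0 : ℝ) < Nat.card (XA A (2 * d - 1)) := by
        exact_mod_cast card_XA_pos hA (2 * d - 1)
      have hSp : (0 : ℝ) < Nat.card (SigA A k) := by exact_mod_cast card_SigA_pos hA k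
      have hstep : Real.log (Nat.card (XA A (2 * d - 1))) + d * Real.log (Nat.card (SigA A k)) ≤
          Real.log (Nat.card (XA A n)) := by
        rw [← Real.log_pow, ← Real.log_mul hX.ne' (by positivity)]
        refine Real.log_le_log (by positivity) ?_
        exact_mod_cast card_step hA hpos hle
      refine le_trans ?_ hstep
      have hkey : α * n - 3 * (Nat.log 2 n + 1) ≤
          (α * (2 * d - 1) - 3 * (Nat.log 2 (2 * d - 1) + 1)) + d := by linarith
      have := mul_le_mul_of_nonneg_left hkey hS
      linarith

lemma tendsto_natLog_div :
    Tendsto (fun n : ℕ => ((Nat.log 2 n : ℝ) + 1) / n) atTop (𝓝 0) := by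
  have h1 : Tendsto (fun n : ℕ => Real.log n / n) atTop (𝓝 0) :=
    (Real.isLittleO_log_id_atTop.tendsto_div_nhds_zero).comp tendsto_natCast_atTop_atTop
  have h2 : Tendsto (fun n : ℕ => 1 / (n : ℝ)) atTop (𝓝 0) := tendsto_one_div_atTop_nhds_zero_nat
  have h3 : Tendsto (fun n : ℕ => (Real.log 2)⁻¹ * (Real.log n / n) + 1 / (n : ℝ)) atTop (𝓝 0) := by
    simpa using (h1.const_mul (Real.log 2)⁻¹).add h2
  refine squeeze_zero (fun n => by positivity) (fun n => ?_) h3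
  have h : (Nat.log 2 n : ℝ) ≤ (Real.log 2)⁻¹ * Real.log n := by
    have := Real.natLog_le_logb n 2
    rw [Real.logb, div_eq_inv_mul] at this
    exact_mod_cast this
  rw [← mul_div_assoc, ← add_div]
  gcongr

/-- For every `k ≥ 1`,
`liminf_{n→∞} (1/n)·log|X_n| ≥ (1/(2(2^k − 1)))·log|Σ_k|`. -/
theorem liminf_ge (A : Fin 2 → Fin 2 → Fin 2)
    (hA : ∀ a : Fin 2, A 0 a = 1 ∧ A a 0 = 1) (k : ℕ) (hk : 1 ≤ k) :
    (1 / (2 * ((2 : ℝ) ^ k - 1))) * Real.log (Nat.card (SigA A k)) ≤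
      Filter.atTop.liminf (fun n : ℕ => Real.log (Nat.card (XA A n)) / (n : ℝ)) := by
  set S := Real.log (Nat.card (SigA A k)) with hS
  set α : ℝ := 1 / (2 * ((2 : ℝ) ^ k - 1)) with hα
  have hlim : Tendsto (fun n : ℕ => α * S - 3 * S * (((Nat.log 2 n : ℝ) + 1) / n)) atTop
      (𝓝 (α * S)) := by
    simpa using (tendsto_natLog_div.const_mul (3 * S)).const_sub (α * S)
  -- The trivial bound `|X_n| ≤ 2^n` keeps the real `liminf` from being a junk value.
  have hub : ∀ n : ℕ, Real.log (Nat.card (XA A n)) / n ≤ Real.log 2 := by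
    intro n
    refine div_le_of_le_mul₀ (Nat.cast_nonneg n) (Real.log_nonneg (by norm_num)) ?_
    rw [mul_comm, ← Real.log_pow]
    refine Real.log_le_log (by exact_mod_cast card_XA_pos hA n) ?_
    exact_mod_cast card_XA_le A n
  have hcob : IsCoboundedUnder (· ≥ ·) atTop
      (fun n : ℕ => Real.log (Nat.card (XA A n)) / (n : ℝ)) :=
    (isBoundedUnder_of ⟨Real.log 2, hub⟩ : IsBoundedUnder (· ≤ ·) atTop _).isCoboundedUnder_ge
  rw [← hlim.liminf_eq]
  refine liminf_le_liminf ?_ hlim.isBoundedUnder_ge hcob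
  filter_upwards [eventually_gt_atTop 0] with n hn
  have hn' : (0 : ℝ) < n := by exact_mod_cast hn
  rw [le_div_iff₀ hn']
  have h := log_card_lower hA hk n
  rw [← hS, ← hα] at h
  refine le_trans (le_of_eq ?_) h
  field_simp
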